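/- arXiv:1805.04261 — 5 statements merged into one kernel-verified Lean document; each statement's English description precedes it below -/
import Mathlib

section
/- For every integer d ≥ 1 and every sign pattern σ of length d+1, there exists exactly one sequence of admissible pairs ((pos_0, neg_0), ..., (pos_{d−1}, neg_{d−1})) for σ satisfying pos_0 + neg_0 = d; for this SAP the pair (pos_0, neg_0) equals the Descartes pair (c(σ), p(σ)) of σ; and the couple (σ, SAP) is realizable. -/
open Polynomial

/-- Number of sign changes among consecutive entries `s 0, …, s n`. -/
def signChanges (s : ℕ → ℤ) (n : ℕ) : ℕ :=
  ((Finset.range n).filter (fun i => s i * s (i + 1) < 0)).card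

/-- Number of sign preservations among consecutive entries `s 0, …, s n`. -/
def signPres (s : ℕ → ℤ) (n : ℕ) : ℕ :=
  ((Finset.range n).filter (fun i => 0 < s i * s (i + 1))).card

/-- `s` encodes a sign pattern of length `d+1` (entries `s 0, …, s d`, each `±1`,
first entry `+1`). -/
def IsSignPattern (d : ℕ) (s : ℕ → ℤ) : Prop :=
  s 0 = 1 ∧ ∀ i ≤ d, s i = 1 ∨ s i = -1

/-- `pn k = (pos_k, neg_k)`, `k = 0, …, d-1`, is a sequence of admissible pairs (SAP)
for the sign pattern `s` of length `d+1`: each pair is admissible for the truncated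
pattern `σ_k` (of length `d+1-k`, with sign changes `signChanges s (d-k)` and sign
preservations `signPres s (d-k)`), the last entry of `σ_k` is `(-1)^{pos_k}`, and the
Rolle-type inequalities and parity condition hold between consecutive pairs. -/
def IsSAP (d : ℕ) (s : ℕ → ℤ) (pn : ℕ → ℕ × ℕ) : Prop :=
  (∀ k < d,
    (pn k).1 ≤ signChanges s (d - k) ∧
    Even ((signChanges s (d - k) : ℤ) - (pn k).1) ∧
    (pn k).2 ≤ signPres s (d - k) ∧
    Even ((signPres s (d - k) : ℤ) - (pn k).2) ∧
    s (d - k) = (-1) ^ (pn k).1) ∧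
  (∀ k, k + 1 < d →
    (pn k).1 ≤ (pn (k + 1)).1 + 1 ∧
    (pn k).2 ≤ (pn (k + 1)).2 + 1 ∧
    (pn k).1 + (pn k).2 ≤ (pn (k + 1)).1 + (pn (k + 1)).2 + 1 ∧
    Even (((pn (k + 1)).1 : ℤ) + (pn (k + 1)).2 + 3 - (pn k).1 - (pn k).2))

/-- The `k`-th derivative of a real polynomial. -/
noncomputable def iterDeriv : ℕ → Polynomial ℝ → Polynomial ℝ
  | 0, P => P
  | k + 1, P => Polynomial.derivative (iterDeriv k P)

/-- `P` has exactly `pos` positive real roots and exactly `neg` negative real roots,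
all of them simple. -/
def CountRoots (P : Polynomial ℝ) (pos neg : ℕ) : Prop :=
  {x : ℝ | 0 < x ∧ P.eval x = 0}.ncard = pos ∧
  {x : ℝ | x < 0 ∧ P.eval x = 0}.ncard = neg ∧
  ∀ x : ℝ, P.eval x = 0 → (Polynomial.derivative P).eval x ≠ 0

/-- The couple (sign pattern `s`, SAP `pn`) of degree `d` is realizable: there is a
monic real polynomial of degree `d`, with all coefficients nonzero, whose coefficient
signs define the pattern `s` (the sign of the coefficient of `x^(d-i)` is `s i`), and
such that for `k = 0, …, d-1` the `k`-th derivative has exactly `(pn k).1` positive and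
`(pn k).2` negative real roots, all simple. -/
def Realizable (d : ℕ) (s : ℕ → ℤ) (pn : ℕ → ℕ × ℕ) : Prop :=
  ∃ P : Polynomial ℝ, P.Monic ∧ P.natDegree = d ∧
    (∀ j ≤ d, P.coeff j ≠ 0) ∧
    (∀ i ≤ d, 0 < (s i : ℝ) * P.coeff (d - i)) ∧
    ∀ k < d, CountRoots (iterDeriv k P) (pn k).1 (pn k).2

/-!
Call a real polynomial strictly hyperbolic if all its roots are real and simple. By Rolle's theorem
this property passes to derivatives, and for such a polynomial with nonzero coefficients the two
Descartes bounds `pos ≤ c` and `neg ≤ p` are equalities, because `pos + neg` and `c + p` both equal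
the degree. Realizability therefore only asks for a strictly hyperbolic polynomial with prescribed
coefficient signs: if `P` works for the pattern without its last entry, then `X * P + ε` works for
the whole pattern when `ε` is small and has the prescribed sign, since simple roots persist under
small perturbations. Uniqueness holds because `pos_k + neg_k` drops by at most one at each step;
starting at `d`, it is at least `d - k`, the sum of the two Descartes bounds at step `k`.
-/

open scoped Topology

theorem signChanges_succ (s : ℕ → ℤ) (n : ℕ) :
    signChanges s (n + 1) = signChanges s n + if s n * s (n + 1) < 0 then 1 else 0 := by
  simp only [signChanges, Finset.card_filter, Finset.sum_range_succ]

theorem signPres_succ (s : ℕ → ℤ) (n : ℕ) :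
    signPres s (n + 1) = signPres s n + if 0 < s n * s (n + 1) then 1 else 0 := by
  simp only [signPres, Finset.card_filter, Finset.sum_range_succ]

theorem signChanges_succ' (s : ℕ → ℤ) (n : ℕ) :
    signChanges s (n + 1) =
      signChanges (fun i => s (i + 1)) n + if s 0 * s 1 < 0 then 1 else 0 := by
  simp only [signChanges, Finset.card_filter, Finset.sum_range_succ', zero_add]

theorem signChanges_add_signPres {s : ℕ → ℤ} {n : ℕ} (hs : ∀ i ≤ n, s i ≠ 0) :
    signChanges s n + signPres s n = n := by
  have hpres : signPres s n = ((Finset.range n).filter fun i => ¬ s i * s (i + 1) < 0).card := by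
    refine congrArg Finset.card (Finset.filter_congr fun i hi => ?_)
    have hi : i < n := Finset.mem_range.1 hi
    rw [not_lt, (mul_ne_zero (hs i hi.le) (hs (i + 1) hi)).symm.le_iff_lt]
  rw [hpres, signChanges, Finset.card_filter_add_card_filter_not, Finset.card_range]

theorem signChanges_alternating (s : ℕ → ℤ) (n : ℕ) :
    signChanges (fun i => (-1) ^ (n - i) * s i) n = signPres s n := by
  refine congrArg Finset.card (Finset.filter_congr fun i hi => ?_)
  have hi : n - i = n - (i + 1) + 1 := by have := Finset.mem_range.1 hi; omega
  have hsq : ((-1 : ℤ) ^ (n - (i + 1))) * (-1) ^ (n - (i + 1)) = 1 := by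
    rw [← mul_pow]; norm_num
  have hprod : (-1) ^ (n - i) * s i * ((-1) ^ (n - (i + 1)) * s (i + 1)) = -(s i * s (i + 1)) := by
    rw [hi, pow_succ]
    linear_combination (-(s i * s (i + 1))) * hsq
  rw [hprod, neg_lt_zero]

/-- The sequence of Descartes pairs `(c(σ_k), p(σ_k))` of the truncations of a sign pattern `σ` of
length `d + 1`. -/
def descartesPairs (d : ℕ) (s : ℕ → ℤ) (k : ℕ) : ℕ × ℕ :=
  (signChanges s (d - k), signPres s (d - k))

namespace IsSignPattern

variable {d : ℕ} {s : ℕ → ℤ}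

theorem ne_zero (hs : IsSignPattern d s) : ∀ i ≤ d, s i ≠ 0 := by
  intro i hi
  rcases hs.2 i hi with h | h <;> simp [h]

theorem mono (hs : IsSignPattern d s) {n : ℕ} (hn : n ≤ d) : IsSignPattern n s :=
  ⟨hs.1, fun i hi => hs.2 i (hi.trans hn)⟩

theorem eq_neg_one_pow_signChanges (hs : IsSignPattern d s) : s d = (-1) ^ signChanges s d := by
  induction d with
  | zero => simp [signChanges, hs.1]
  | succ n ih =>
    have hn := ih (hs.mono n.le_succ)
    rw [signChanges_succ, pow_add, ← hn]
    rcases hs.2 n n.le_succ with h | h <;> rcases hs.2 (n + 1) le_rfl with h' | h' <;> simp [h, h']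

theorem isSAP_descartesPairs (hs : IsSignPattern d s) : IsSAP d s (descartesPairs d s) := by
  refine ⟨fun k _ => ⟨le_rfl, by simp [descartesPairs], le_rfl, by simp [descartesPairs],
    (hs.mono (d.sub_le k)).eq_neg_one_pow_signChanges⟩, fun k hk => ?_⟩
  obtain ⟨m, hm⟩ : ∃ m, d = m + (k + 1) := ⟨d - (k + 1), by omega⟩
  have hsum := signChanges_add_signPres (hs.mono (n := m) (by omega)).ne_zero
  have hsum' := signChanges_add_signPres (hs.mono (n := m + 1) (by omega)).ne_zero
  have hc := signChanges_succ s m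
  have hp := signPres_succ s m
  simp only [descartesPairs, show d - k = m + 1 by omega, show d - (k + 1) = m by omega]
  refine ⟨?_, ?_, by omega, 1, by omega⟩
  · split_ifs at hc <;> omega
  · split_ifs at hp <;> omega

end IsSignPattern

theorem IsSAP.eq_descartesPairs {d : ℕ} {s : ℕ → ℤ} {pn : ℕ → ℕ × ℕ} (h : IsSAP d s pn)
    (hs : IsSignPattern d s) (h0 : (pn 0).1 + (pn 0).2 = d) {k : ℕ} (hk : k < d) :
    pn k = descartesPairs d s k := by
  have htotal : ∀ j < d, d - j ≤ (pn j).1 + (pn j).2 := by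
    intro j hj
    induction j with
    | zero => omega
    | succ j ih =>
      have hprev := ih (by omega)
      have hdrop := (h.2 j hj).2.2.1
      omega
  have hsum := signChanges_add_signPres (hs.mono (d.sub_le k)).ne_zero
  obtain ⟨hpos, -, hneg, -⟩ := h.1 k hk
  have htotal := htotal k hk
  exact Prod.ext (by simp only [descartesPairs]; omega) (by simp only [descartesPairs]; omega)

theorem sign_eq_neg_sign_iff_of_mul_pos {R : Type*} [Ring R] [LinearOrder R] [IsStrictOrderedRing R]
    {a b u v : R} (hua : 0 < u * a) (hvb : 0 < v * b) :
    SignType.sign a = -SignType.sign b ↔ u * v < 0 := by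
  rcases pos_and_pos_or_neg_and_neg_of_mul_pos hua with ⟨hu, ha⟩ | ⟨hu, ha⟩ <;>
    rcases pos_and_pos_or_neg_and_neg_of_mul_pos hvb with ⟨hv, hb⟩ | ⟨hv, hb⟩ <;>
    simp [sign_pos, sign_neg, mul_neg_iff, ha, hb, hu, hv, hu.not_gt, hv.not_gt]

/-- `P` has degree `n` and its coefficients, read from the leading one downwards, are nonzero and
have the signs of `s 0, …, s n`. With this indexing, differentiation truncates the pattern without
changing `s`. -/
structure HasSignPattern (s : ℕ → ℤ) (n : ℕ) (P : ℝ[X]) : Prop where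
  natDegree_eq : P.natDegree = n
  coeff_pos : ∀ i ≤ n, 0 < (s i : ℝ) * P.coeff (n - i)

namespace HasSignPattern

variable {s : ℕ → ℤ} {n : ℕ} {P : ℝ[X]}

theorem of_natDegree_le (hdeg : P.natDegree ≤ n)
    (hcoeff : ∀ i ≤ n, 0 < (s i : ℝ) * P.coeff (n - i)) : HasSignPattern s n P where
  natDegree_eq := hdeg.antisymm (le_natDegree_of_ne_zero (right_ne_zero_of_mul
    (hcoeff 0 n.zero_le).ne'))
  coeff_pos := hcoeff

theorem coeff_ne_zero (h : HasSignPattern s n P) {j : ℕ} (hj : j ≤ n) : P.coeff j ≠ 0 := by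
  have hpos := h.coeff_pos (n - j) (n.sub_le j)
  rw [Nat.sub_sub_self hj] at hpos
  exact right_ne_zero_of_mul hpos.ne'

theorem eval_zero_ne_zero (h : HasSignPattern s n P) : P.eval 0 ≠ 0 := by
  rw [← coeff_zero_eq_eval_zero]
  exact h.coeff_ne_zero n.zero_le

theorem ne_zero (h : HasSignPattern s n P) : P ≠ 0 := by
  rintro rfl
  exact h.eval_zero_ne_zero eval_zero

theorem sign_ne_zero (h : HasSignPattern s n P) : ∀ i ≤ n, s i ≠ 0 := by
  intro i hi
  exact_mod_cast left_ne_zero_of_mul (h.coeff_pos i hi).ne'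

theorem derivative (h : HasSignPattern s (n + 1) P) :
    HasSignPattern s n (Polynomial.derivative P) := by
  refine of_natDegree_le ((natDegree_derivative_le P).trans_eq (by simp [h.natDegree_eq]))
    fun i hi => ?_
  have hpos := h.coeff_pos i (by omega)
  rw [coeff_derivative, ← mul_assoc, show n - i + 1 = n + 1 - i by omega]
  positivity

theorem iterDeriv (h : HasSignPattern s n P) {k : ℕ} (hk : k ≤ n) :
    HasSignPattern s (n - k) (iterDeriv k P) := by
  induction k with
  | zero => exact h
  | succ k ih =>
    have hprev := ih (by omega)
    rw [show n - k = n - (k + 1) + 1 by omega] at hprev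
    exact hprev.derivative

theorem X_mul_add_C (h : HasSignPattern s n P) {ε : ℝ} (hε : 0 < s (n + 1) * ε) :
    HasSignPattern s (n + 1) (X * P + C ε) := by
  refine of_natDegree_le ?_ fun i hi => ?_
  · rw [natDegree_add_C, natDegree_X_mul h.ne_zero, h.natDegree_eq]
  · rcases hi.eq_or_lt with rfl | hi
    · simpa using hε
    · have hi : i ≤ n := Nat.lt_succ_iff.1 hi
      simpa [Nat.sub_add_comm hi, coeff_C_succ] using h.coeff_pos i hi

theorem eraseLead (h : HasSignPattern s (n + 1) P) :
    HasSignPattern (fun i => s (i + 1)) n P.eraseLead := by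
  refine of_natDegree_le ((eraseLead_natDegree_le P).trans_eq (by simp [h.natDegree_eq]))
    fun i hi => ?_
  rw [eraseLead_coeff_of_ne _ (by rw [h.natDegree_eq]; omega)]
  simpa using h.coeff_pos (i + 1) (by omega)

theorem comp_neg_X (h : HasSignPattern s n P) :
    HasSignPattern (fun i => (-1) ^ (n - i) * s i) n (P.comp (-X)) := by
  refine of_natDegree_le (by simp [natDegree_comp, h.natDegree_eq]) fun i hi => ?_
  have hsq : ((-1 : ℝ) ^ (n - i)) * (-1) ^ (n - i) = 1 := by rw [← mul_pow]; norm_num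
  convert h.coeff_pos i hi using 1
  rw [neg_eq_neg_one_mul (X : ℝ[X]), ← C_1, ← C_neg, comp_C_mul_X_coeff]
  push_cast
  linear_combination ((s i : ℝ) * P.coeff (n - i)) * hsq

theorem signVariations_eq (h : HasSignPattern s n P) : P.signVariations = signChanges s n := by
  induction n generalizing s P with
  | zero =>
    rw [eq_C_of_natDegree_eq_zero h.natDegree_eq, ← monomial_zero_left, signVariations_monomial]
    simp [signChanges]
  | succ n ih =>
    have hlead : 0 < (s 0 : ℝ) * P.leadingCoeff := by
      simpa [leadingCoeff, h.natDegree_eq] using h.coeff_pos 0 (by omega)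
    have hnext : 0 < (s 1 : ℝ) * P.eraseLead.leadingCoeff := by
      simpa [leadingCoeff, h.eraseLead.natDegree_eq] using h.eraseLead.coeff_pos 0 n.zero_le
    have hsign : SignType.sign P.leadingCoeff = -SignType.sign P.eraseLead.leadingCoeff ↔
        s 0 * s 1 < 0 := by
      rw [sign_eq_neg_sign_iff_of_mul_pos hlead hnext]
      norm_cast
    rw [signVariations_eq_eraseLead_add_ite h.ne_zero, ih h.eraseLead, signChanges_succ']
    simp only [hsign]

end HasSignPattern

theorem eventually_exists_mem_roots_add_C {𝕜 : Type*} [NontriviallyNormedField 𝕜]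
    [CompleteSpace 𝕜] {P : 𝕜[X]} {r : 𝕜} (hr : P.eval r = 0)
    (hr' : (derivative P).eval r ≠ 0) {U : Set 𝕜} (hU : U ∈ 𝓝 r) :
    ∀ᶠ ε in 𝓝 0, ∃ x ∈ U, x ∈ (P + C ε).roots := by
  have hopen : Filter.map (fun x => P.eval x) (𝓝 r) = 𝓝 0 :=
    hr ▸ (P.hasStrictDerivAt r).map_nhds_eq hr'
  have himage : (fun x => P.eval x) '' U ∈ 𝓝 (0 : 𝕜) := hopen ▸ Filter.image_mem_map hU
  filter_upwards [(continuous_neg.tendsto' (0 : 𝕜) 0 neg_zero).eventually himage]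
  rintro ε ⟨x, hxU, hx⟩
  have hne : P + C ε ≠ 0 := by
    intro hzero
    have hderiv : derivative P = derivative (P + C ε) := by simp
    simp [hderiv, hzero] at hr'
  exact ⟨x, hxU, (mem_roots hne).2 (by simp [hx])⟩

/-- `P` has only real roots, all of them simple: it has as many distinct real roots as its degree.
The zero polynomial satisfies this by convention. -/
def IsStrictlyHyperbolic (P : ℝ[X]) : Prop :=
  P.roots.toFinset.card = P.natDegree

theorem isStrictlyHyperbolic_of_natDegree_le {P : ℝ[X]}
    (h : P.natDegree ≤ P.roots.toFinset.card) : IsStrictlyHyperbolic P :=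
  ((Multiset.toFinset_card_le _).trans P.card_roots').antisymm h

namespace IsStrictlyHyperbolic

variable {P : ℝ[X]}

theorem nodup_roots (hP : IsStrictlyHyperbolic P) : P.roots.Nodup :=
  Multiset.toFinset_card_eq_card_iff_nodup.1 <|
    (Multiset.toFinset_card_le _).antisymm (P.card_roots'.trans_eq hP.symm)

theorem eval_derivative_ne_zero (hP : IsStrictlyHyperbolic P) {x : ℝ} (hx : x ∈ P.roots) :
    (Polynomial.derivative P).eval x ≠ 0 := by
  intro hx'
  have hmult := (one_lt_rootMultiplicity_iff_isRoot (ne_zero_of_mem_roots hx)).2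
    ⟨isRoot_of_mem_roots hx, hx'⟩
  rw [← count_roots] at hmult
  exact hmult.not_ge (Multiset.nodup_iff_count_le_one.1 hP.nodup_roots x)

theorem derivative (hP : IsStrictlyHyperbolic P) :
    IsStrictlyHyperbolic (Polynomial.derivative P) := by
  apply isStrictlyHyperbolic_of_natDegree_le
  have hrolle := card_roots_toFinset_le_derivative P
  have hdeg := natDegree_derivative_le P
  rw [hP] at hrolle
  omega

theorem iterDeriv (hP : IsStrictlyHyperbolic P) (k : ℕ) : IsStrictlyHyperbolic (iterDeriv k P) := by
  induction k with
  | zero => exact hP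
  | succ k ih => exact ih.derivative

theorem X_mul (hP : IsStrictlyHyperbolic P) (h0 : P.eval 0 ≠ 0) :
    IsStrictlyHyperbolic (X * P) := by
  have hP0 : P ≠ 0 := by rintro rfl; exact h0 eval_zero
  have hroots : (X * P).roots.toFinset = insert 0 P.roots.toFinset := by
    rw [roots_mul (mul_ne_zero X_ne_zero hP0), roots_X, Multiset.toFinset_add,
      Multiset.toFinset_singleton, Finset.insert_eq]
  rw [IsStrictlyHyperbolic, hroots, Finset.card_insert_of_notMem (by simp [hP0, h0]), hP,
    natDegree_X_mul hP0]

theorem eventually_add_C (hP : IsStrictlyHyperbolic P) :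
    ∀ᶠ ε in 𝓝 0, IsStrictlyHyperbolic (P + C ε) := by
  obtain ⟨U, hU, hdisj⟩ := P.roots.toFinset.finite_toSet.t2_separation
  have hnear : ∀ r ∈ P.roots.toFinset, ∀ᶠ ε in 𝓝 0, ∃ x ∈ U r, x ∈ (P + C ε).roots := by
    intro r hr
    have hr : r ∈ P.roots := Multiset.mem_toFinset.1 hr
    exact eventually_exists_mem_roots_add_C (isRoot_of_mem_roots hr)
      (hP.eval_derivative_ne_zero hr) ((hU r).2.mem_nhds (hU r).1)
  filter_upwards [(Filter.eventually_all_finset _).2 hnear] with ε hε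
  choose! x hxU hx using hε
  apply isStrictlyHyperbolic_of_natDegree_le
  rw [natDegree_add_C, ← hP]
  refine Finset.card_le_card_of_injOn x (fun r hr => Multiset.mem_toFinset.2 (hx r hr))
    fun r hr r' hr' hrr' => ?_
  by_contra hne
  exact (hdisj hr hr' hne).ne_of_mem (hxU r hr) (hxU r' hr') hrr'

end IsStrictlyHyperbolic

theorem ncard_setOf_and_eval_eq_zero {R : Type*} [CommRing R] [IsDomain R] [DecidableEq R]
    {P : R[X]} (hP : P ≠ 0) (p : R → Prop) [DecidablePred p] :
    {x : R | p x ∧ P.eval x = 0}.ncard = (P.roots.toFinset.filter p).card := by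
  rw [← Set.ncard_coe_finset]
  congr 1
  ext x
  simp [hP, and_comm]

section OrderedRing

variable {R : Type*} [CommRing R] [LinearOrder R] [IsStrictOrderedRing R]

theorem ncard_pos_roots_le_signVariations {P : R[X]} (hP : P ≠ 0) :
    {x : R | 0 < x ∧ P.eval x = 0}.ncard ≤ P.signVariations :=
  calc {x : R | 0 < x ∧ P.eval x = 0}.ncard = (P.roots.filter (0 < ·)).toFinset.card := by
        rw [ncard_setOf_and_eval_eq_zero hP, Multiset.toFinset_filter]
    _ ≤ (P.roots.filter (0 < ·)).card := Multiset.toFinset_card_le _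
    _ = P.roots.countP (0 < ·) := (Multiset.countP_eq_card_filter _ _).symm
    _ ≤ P.signVariations := P.roots_countP_pos_le_signVariations

theorem ncard_neg_roots_eq_ncard_pos_roots_comp_neg_X (P : R[X]) :
    {x : R | x < 0 ∧ P.eval x = 0}.ncard = {x : R | 0 < x ∧ (P.comp (-X)).eval x = 0}.ncard := by
  rw [← Set.ncard_image_of_injective _ neg_injective]
  congr 1
  ext x
  simp

theorem ncard_pos_roots_add_ncard_neg_roots {P : R[X]} (h0 : P.eval 0 ≠ 0) :
    {x : R | 0 < x ∧ P.eval x = 0}.ncard + {x : R | x < 0 ∧ P.eval x = 0}.ncard =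
      P.roots.toFinset.card := by
  have hP : P ≠ 0 := by rintro rfl; exact h0 eval_zero
  have hneg : P.roots.toFinset.filter (· < 0) = P.roots.toFinset.filter (¬ 0 < ·) := by
    refine Finset.filter_congr fun x hx => ?_
    have hx0 : x ≠ 0 := by
      rintro rfl
      exact h0 (isRoot_of_mem_roots (Multiset.mem_toFinset.1 hx))
    rw [not_lt, hx0.le_iff_lt]
  rw [ncard_setOf_and_eval_eq_zero hP, ncard_setOf_and_eval_eq_zero hP, hneg,
    Finset.card_filter_add_card_filter_not]

end OrderedRing

theorem IsStrictlyHyperbolic.countRoots {P : ℝ[X]} {s : ℕ → ℤ} {n : ℕ}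
    (hP : IsStrictlyHyperbolic P) (h : HasSignPattern s n P) :
    CountRoots P (signChanges s n) (signPres s n) := by
  have hpos : {x : ℝ | 0 < x ∧ P.eval x = 0}.ncard ≤ signChanges s n :=
    h.signVariations_eq ▸ ncard_pos_roots_le_signVariations h.ne_zero
  have hneg : {x : ℝ | x < 0 ∧ P.eval x = 0}.ncard ≤ signPres s n := by
    rw [ncard_neg_roots_eq_ncard_pos_roots_comp_neg_X, ← signChanges_alternating,
      ← h.comp_neg_X.signVariations_eq]
    exact ncard_pos_roots_le_signVariations h.comp_neg_X.ne_zero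
  have hroots := ncard_pos_roots_add_ncard_neg_roots h.eval_zero_ne_zero
  rw [hP, h.natDegree_eq] at hroots
  have hsigns := signChanges_add_signPres h.sign_ne_zero
  exact ⟨by omega, by omega, fun x hx =>
    hP.eval_derivative_ne_zero ((mem_roots h.ne_zero).2 hx)⟩

theorem exists_isStrictlyHyperbolic_hasSignPattern {s : ℕ → ℤ} {n : ℕ} (h0 : 0 < s 0)
    (hs : ∀ i ≤ n, s i ≠ 0) :
    ∃ P : ℝ[X], P.Monic ∧ IsStrictlyHyperbolic P ∧ HasSignPattern s n P := by
  induction n with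
  | zero => exact ⟨1, monic_one, by simp [IsStrictlyHyperbolic], by simp, by simpa using h0⟩
  | succ n ih =>
    obtain ⟨P, hmonic, hhyp, hsign⟩ := ih fun i hi => hs i (by omega)
    have htendsto : Filter.Tendsto (fun δ : ℝ => s (n + 1) * δ) (𝓝[>] 0) (𝓝 0) :=
      ((continuous_const_mul _).tendsto' 0 0 (mul_zero _)).mono_left nhdsWithin_le_nhds
    obtain ⟨δ, hδhyp, hδ⟩ := ((htendsto.eventually
      (hhyp.X_mul hsign.eval_zero_ne_zero).eventually_add_C).and self_mem_nhdsWithin).exists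
    refine ⟨X * P + C (s (n + 1) * δ), ?_, hδhyp, hsign.X_mul_add_C ?_⟩
    · refine (monic_X.mul hmonic).add_of_left (degree_lt_degree ?_)
      rw [natDegree_C, natDegree_X_mul hmonic.ne_zero]
      exact Nat.succ_pos _
    · have hδ : 0 < δ := hδ
      have hne : (s (n + 1) : ℝ) ≠ 0 := Int.cast_ne_zero.2 (hs (n + 1) le_rfl)
      rw [← mul_assoc]
      exact mul_pos (mul_self_pos.2 hne) hδ

theorem IsSignPattern.realizable_descartesPairs {d : ℕ} {s : ℕ → ℤ} (hs : IsSignPattern d s) :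
    Realizable d s (descartesPairs d s) := by
  obtain ⟨P, hmonic, hhyp, hsign⟩ := exists_isStrictlyHyperbolic_hasSignPattern
    (hs.1 ▸ one_pos) hs.ne_zero
  exact ⟨P, hmonic, hsign.natDegree_eq, fun j hj => hsign.coeff_ne_zero hj, hsign.coeff_pos,
    fun k hk => (hhyp.iterDeriv k).countRoots (hsign.iterDeriv hk.le)⟩

/-- For every sign pattern of length `d+1`, `d ≥ 1`, there is a unique SAP with
`pos_0 + neg_0 = d`; its first pair is the Descartes pair, and it is realizable. -/
theorem stmt0 (d : ℕ) (hd : 1 ≤ d) (s : ℕ → ℤ) (hs : IsSignPattern d s) :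
    ∃ pn : ℕ → ℕ × ℕ,
      IsSAP d s pn ∧ (pn 0).1 + (pn 0).2 = d ∧
      (pn 0).1 = signChanges s d ∧ (pn 0).2 = signPres s d ∧
      Realizable d s pn ∧
      ∀ pn' : ℕ → ℕ × ℕ, IsSAP d s pn' → (pn' 0).1 + (pn' 0).2 = d →
        ∀ k < d, pn' k = pn k :=
  ⟨descartesPairs d s, hs.isSAP_descartesPairs, signChanges_add_signPres hs.ne_zero, rfl, rfl,
    hs.realizable_descartesPairs, fun _ h h0 _ hk => h.eq_descartesPairs hs h0 hk⟩
end

section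
/- Let d be an even positive integer, let σ be a sign pattern of length d+1, and let U be a SAP for σ such that the couple (σ, U) is realizable by some polynomial. Let σ* (resp. σ†) denote the sign pattern of length d+2 obtained from σ by appending a sign +1 (resp. −1) on the right. Then the couple (σ*, ((0,1), U)) is realizable and the couple (σ†, ((1,0), U)) is realizable, where ((a,b), U) denotes the sequence of d+1 pairs beginning with (a,b) and followed by the pairs of U. -/
open Polynomial

/-!
Let `P` realize `(σ, U)` and let `Q` be a polynomial with `Q' = (d + 1) P`. The derivatives of
`Q ± K` then have the root counts prescribed by `U`, whatever the constant `K`. As `d` is even, `Q`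
is monic of odd degree; hence it is strictly increasing near `±∞`, and for large `K` the only
solution of `Q = K` (resp. `Q = -K`) lies far to the right (resp. left) and is simple. So `Q - K`
has exactly one real root, a simple positive one, and `Q + K` exactly one, a simple negative one,
while the constant coefficient of `Q ± K` has the sign of `±K`.
-/

open Filter

section Antiderivative

variable {R : Type*}

theorem derivative_surjective [DivisionRing R] [CharZero R] :
    Function.Surjective (derivative : R[X] → R[X]) := by
  intro P
  induction P using Polynomial.induction_on' with
  | add P₁ P₂ h₁ h₂ =>
    obtain ⟨Q₁, rfl⟩ := h₁
    obtain ⟨Q₂, rfl⟩ := h₂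
    exact ⟨Q₁ + Q₂, derivative_add⟩
  | monomial n a =>
    have hn : (n : R) + 1 ≠ 0 := n.cast_add_one_ne_zero
    exact ⟨monomial (n + 1) (a / (n + 1)), by simp [hn]⟩

theorem natDegree_eq_natDegree_derivative_add_one [Semiring R] [IsAddTorsionFree R] {Q : R[X]}
    (hQ : derivative Q ≠ 0) : Q.natDegree = (derivative Q).natDegree + 1 := by
  have hdeg : Q.natDegree ≠ 0 := derivative_ne_zero.1 hQ
  rw [natDegree_derivative, Nat.sub_add_cancel (Nat.one_le_iff_ne_zero.2 hdeg)]

variable [Ring R] [IsDomain R] [CharZero R] {P Q : R[X]}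

theorem natDegree_eq_of_derivative_eq_C_mul {c : R} (hc : c ≠ 0) (hP : P ≠ 0)
    (hQ : derivative Q = C c * P) : Q.natDegree = P.natDegree + 1 := by
  have hQ' : derivative Q ≠ 0 := hQ ▸ mul_ne_zero (C_ne_zero.2 hc) hP
  rw [natDegree_eq_natDegree_derivative_add_one hQ', hQ, natDegree_C_mul hc]

theorem monic_of_derivative_eq_C_mul (hP : P.Monic)
    (hQ : derivative Q = C (P.natDegree + 1 : R) * P) : Q.Monic := by
  have hc : (P.natDegree : R) + 1 ≠ 0 := Nat.cast_add_one_ne_zero _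
  have hlead := congrArg leadingCoeff hQ
  rw [leadingCoeff_derivative, natDegree_eq_of_derivative_eq_C_mul hc hP.ne_zero hQ,
    leadingCoeff_mul, leadingCoeff_C, hP.leadingCoeff, mul_one, Nat.cast_add_one] at hlead
  exact mul_right_cancel₀ hc (hlead.trans (one_mul _).symm)

end Antiderivative

section LargeValues

variable {α β : Type*} [ConditionallyCompleteLinearOrder α] [TopologicalSpace α] [OrderTopology α]
  [LinearOrder β] [TopologicalSpace β] [OrderClosedTopology β] {f : α → β}

theorem bddAbove_image_Iic_of_tendsto_atBot (hf : Continuous f) (hbot : Tendsto f atBot atBot)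
    (M : α) : BddAbove (f '' Set.Iic M) := by
  have : Nonempty α := ⟨M⟩
  obtain ⟨N, hN⟩ := eventually_atBot.1 (hbot.eventually_le_atBot (f M))
  have : Nonempty β := ⟨f M⟩
  have hleft : BddAbove (f '' Set.Iic N) := ⟨f M, Set.forall_mem_image.2 hN⟩
  have hmiddle : BddAbove (f '' Set.Icc N M) := isCompact_Icc.bddAbove_image hf.continuousOn
  refine (hleft.union hmiddle).mono ?_
  rw [← Set.image_union]
  exact Set.image_mono fun x hx => (le_total x N).imp_right fun h => ⟨h, hx⟩

theorem eventually_exists_forall_eq_iff_eq [DenselyOrdered α] [NoMaxOrder β] (hf : Continuous f)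
    (htop : Tendsto f atTop atTop) (hbot : Tendsto f atBot atBot) {M : α}
    (hinj : Set.InjOn f (Set.Ici M)) :
    ∀ᶠ y in atTop, ∃ a, M ≤ a ∧ ∀ x, f x = y ↔ x = a := by
  obtain ⟨B, hB⟩ := bddAbove_image_Iic_of_tendsto_atBot hf hbot M
  filter_upwards [eventually_gt_atTop B] with y hy
  have hright : ∀ x, f x = y → M ≤ x := fun x hx => by
    by_contra! hxM
    exact (hB ⟨x, hxM.le, hx⟩).not_gt hy
  obtain ⟨a, ha⟩ := hf.surjective htop hbot y
  exact ⟨a, hright a ha, fun x =>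
    ⟨fun hx => hinj (hright x hx) (hright a ha) (hx.trans ha.symm), fun hx => hx ▸ ha⟩⟩

end LargeValues

section Asymptotics

variable {𝕜 : Type*} [NormedField 𝕜] [LinearOrder 𝕜] [IsStrictOrderedRing 𝕜] [OrderTopology 𝕜]
  {P : 𝕜[X]}

theorem eventually_atTop_eval_pos (hP : 0 < P.leadingCoeff) : ∀ᶠ x in atTop, 0 < P.eval x := by
  rcases le_or_gt P.degree 0 with hdeg | hdeg
  · rw [eq_C_of_degree_le_zero hdeg, leadingCoeff_C] at hP
    rw [eq_C_of_degree_le_zero hdeg]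
    simpa only [eval_C] using Eventually.of_forall fun _ => hP
  · exact (P.tendsto_atTop_of_leadingCoeff_nonneg hdeg hP.le).eventually_gt_atTop 0

theorem tendsto_eval_atBot_atBot_of_odd_natDegree (hP : 0 ≤ P.leadingCoeff)
    (hodd : Odd P.natDegree) : Tendsto (fun x => P.eval x) atBot atBot := by
  have hdeg : 0 < (P.comp (-X)).degree := by
    rw [degree_comp_neg_X]
    exact natDegree_pos_iff_degree_pos.1 hodd.pos
  have hlead : (P.comp (-X)).leadingCoeff ≤ 0 := by simpa [hodd.neg_one_pow] using hP
  simpa [Function.comp_def] using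
    ((P.comp (-X)).tendsto_atBot_of_leadingCoeff_nonpos hdeg hlead).comp tendsto_neg_atBot_atTop

end Asymptotics

section CountRoots

variable {P Q : ℝ[X]} {m n : ℕ}

theorem countRoots_C_mul {c : ℝ} (hc : c ≠ 0) :
    CountRoots (C c * P) m n ↔ CountRoots P m n := by
  simp [CountRoots, hc]

theorem CountRoots.comp_neg_X (h : CountRoots P m n) : CountRoots (P.comp (-X)) n m := by
  obtain ⟨hpos, hneg, hsimple⟩ := h
  refine ⟨?_, ?_, fun x hx => ?_⟩
  · rw [← hneg, ← Set.ncard_neg]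
    congr 1
    ext x
    simp
  · rw [← hpos, ← Set.ncard_neg]
    congr 1
    ext x
    simp
  · simpa [derivative_comp] using hsimple (-x) (by simpa using hx)

theorem countRoots_one_zero_of_forall_eval_eq_zero_iff {a : ℝ} (ha : 0 < a)
    (hroot : ∀ x, P.eval x = 0 ↔ x = a) (hsimple : (derivative P).eval a ≠ 0) :
    CountRoots P 1 0 := by
  have hpos : {x : ℝ | 0 < x ∧ P.eval x = 0} = {a} := by grind
  have hneg : {x : ℝ | x < 0 ∧ P.eval x = 0} = ∅ := by grind
  refine ⟨?_, ?_, fun x hx => (hroot x).1 hx ▸ hsimple⟩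
  · rw [hpos, Set.ncard_singleton]
  · rw [hneg, Set.ncard_empty]

theorem eventually_countRoots_sub_C (hlead : 0 < Q.leadingCoeff) (hodd : Odd Q.natDegree) :
    ∀ᶠ K in atTop, CountRoots (Q - C K) 1 0 := by
  have hlead' : 0 < (derivative Q).leadingCoeff := by
    rw [leadingCoeff_derivative]
    exact mul_pos hlead (Nat.cast_pos.2 hodd.pos)
  obtain ⟨M, hM⟩ :=
    eventually_atTop.1 ((eventually_gt_atTop 0).and (eventually_atTop_eval_pos hlead'))
  have hmono : StrictMonoOn (fun x => Q.eval x) (Set.Ici M) := by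
    refine strictMonoOn_of_deriv_pos (convex_Ici M) Q.continuousOn fun x hx => ?_
    rw [Q.deriv]
    exact (hM x (interior_subset hx)).2
  have htop : Tendsto (fun x => Q.eval x) atTop atTop :=
    Q.tendsto_atTop_of_leadingCoeff_nonneg (natDegree_pos_iff_degree_pos.1 hodd.pos) hlead.le
  have hbot := tendsto_eval_atBot_atBot_of_odd_natDegree hlead.le hodd
  filter_upwards [eventually_exists_forall_eq_iff_eq Q.continuous htop hbot hmono.injOn] with K hK
  obtain ⟨a, haM, ha⟩ := hK
  refine countRoots_one_zero_of_forall_eval_eq_zero_iff (hM a haM).1 (fun x => ?_) ?_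
  · rw [eval_sub, eval_C, sub_eq_zero, ha]
  · simpa using (hM a haM).2.ne'

theorem eventually_countRoots_add_C (hlead : 0 < Q.leadingCoeff) (hodd : Odd Q.natDegree) :
    ∀ᶠ K in atTop, CountRoots (Q + C K) 0 1 := by
  have hlead' : 0 < (-Q.comp (-X)).leadingCoeff := by simpa [hodd.neg_one_pow] using hlead
  have hodd' : Odd (-Q.comp (-X)).natDegree := by simpa [natDegree_comp] using hodd
  filter_upwards [eventually_countRoots_sub_C hlead' hodd'] with K hK
  have hreflect : (-Q.comp (-X) - C K).comp (-X) = C (-1) * (Q + C K) := by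
    rw [sub_comp, neg_comp, comp_neg_X_comp_neg_X, C_comp, C_neg, C_1]
    ring
  rw [← countRoots_C_mul (neg_ne_zero.2 one_ne_zero), ← hreflect]
  exact hK.comp_neg_X

end CountRoots

theorem iterDeriv_eq_iterate (k : ℕ) (P : ℝ[X]) : iterDeriv k P = derivative^[k] P := by
  induction k with
  | zero => rfl
  | succ k ih => rw [iterDeriv, ih, Function.iterate_succ_apply']

/-- The polynomial `P` realizes the couple (`s`, `pn`) of degree `d`, i.e. it is a witness for
`Realizable d s pn`. That no coefficient vanishes is left out, being part of `sign`. -/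
structure Realizes (P : ℝ[X]) (d : ℕ) (s : ℕ → ℤ) (pn : ℕ → ℕ × ℕ) : Prop where
  monic : P.Monic
  natDegree_eq : P.natDegree = d
  sign : ∀ i ≤ d, 0 < (s i : ℝ) * P.coeff (d - i)
  countRoots : ∀ k < d, CountRoots (derivative^[k] P) (pn k).1 (pn k).2

section Realizes

variable {P Q : ℝ[X]} {d : ℕ} {s : ℕ → ℤ} {pn : ℕ → ℕ × ℕ}

theorem Realizes.coeff_ne_zero (hP : Realizes P d s pn) {j : ℕ} (hj : j ≤ d) :
    P.coeff j ≠ 0 := by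
  have h := hP.sign (d - j) (Nat.sub_le d j)
  rw [Nat.sub_sub_self hj] at h
  exact right_ne_zero_of_mul h.ne'

theorem realizable_iff_exists_realizes : Realizable d s pn ↔ ∃ P, Realizes P d s pn := by
  simp only [Realizable, iterDeriv_eq_iterate]
  exact exists_congr fun P =>
    ⟨fun ⟨hmonic, hdeg, _, hsign, hroots⟩ => ⟨hmonic, hdeg, hsign, hroots⟩,
      fun h => ⟨h.monic, h.natDegree_eq, fun _ => h.coeff_ne_zero, h.sign, h.countRoots⟩⟩

theorem Realizes.append (hP : Realizes P d s pn) (hQ : derivative Q = C (d + 1 : ℝ) * P) {e : ℤ}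
    (he : 0 < (e : ℝ) * Q.coeff 0) {p : ℕ × ℕ} (hp : CountRoots Q p.1 p.2) :
    Realizes Q (d + 1) (fun i => if i = d + 1 then e else s i)
      (fun k => if k = 0 then p else pn (k - 1)) where
  monic := monic_of_derivative_eq_C_mul hP.monic (by rwa [hP.natDegree_eq])
  natDegree_eq := by
    rw [natDegree_eq_of_derivative_eq_C_mul d.cast_add_one_ne_zero hP.monic.ne_zero hQ,
      hP.natDegree_eq]
  sign i hi := by
    rcases hi.eq_or_lt with rfl | hi
    · simpa using he
    · have hcoeff := congrArg (coeff · (d - i)) hQ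
      simp only [coeff_derivative, coeff_C_mul] at hcoeff
      rw [if_neg hi.ne, Nat.sub_add_comm (Nat.lt_succ_iff.1 hi)]
      refine pos_of_mul_pos_left (b := ((d - i : ℕ) : ℝ) + 1) ?_ (by positivity)
      rw [mul_assoc, hcoeff, mul_left_comm]
      exact mul_pos d.cast_add_one_pos (hP.sign i (Nat.lt_succ_iff.1 hi))
  countRoots
    | 0, _ => hp
    | k + 1, hk => by
      rw [Function.iterate_succ_apply, hQ, iterate_derivative_C_mul,
        countRoots_C_mul d.cast_add_one_ne_zero]
      exact hP.countRoots k (Nat.lt_of_succ_lt_succ hk)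

end Realizes

/-- Extension of a realizable couple (sign pattern, SAP) of even degree `d` by
appending a `+` (resp. a `-`) sign and the pair `(0,1)` (resp. `(1,0)`). -/
theorem stmt1 (d : ℕ) (hd : 0 < d) (hdeven : Even d) (s : ℕ → ℤ)
    (hs : IsSignPattern d s) (pn : ℕ → ℕ × ℕ) (hpn : IsSAP d s pn)
    (hre : Realizable d s pn) :
    Realizable (d + 1) (fun i => if i = d + 1 then 1 else s i)
      (fun k => if k = 0 then (0, 1) else pn (k - 1)) ∧
    Realizable (d + 1) (fun i => if i = d + 1 then -1 else s i)
      (fun k => if k = 0 then (1, 0) else pn (k - 1)) := by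
  obtain ⟨P, hP⟩ := realizable_iff_exists_realizes.1 hre
  obtain ⟨Q, hQ⟩ := derivative_surjective (C (d + 1 : ℝ) * P)
  have hlead : 0 < Q.leadingCoeff := by
    rw [monic_of_derivative_eq_C_mul hP.monic (by rwa [hP.natDegree_eq])]
    exact one_pos
  have hodd : Odd Q.natDegree := by
    rw [natDegree_eq_of_derivative_eq_C_mul d.cast_add_one_ne_zero hP.monic.ne_zero hQ,
      hP.natDegree_eq]
    exact hdeven.add_one
  constructor
  · obtain ⟨K, hroots, hK⟩ := ((eventually_countRoots_add_C hlead hodd).and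
      (eventually_gt_atTop (-Q.coeff 0))).exists
    exact realizable_iff_exists_realizes.2 ⟨Q + C K,
      hP.append (by simpa using hQ) (by simpa using neg_lt_iff_pos_add'.1 hK) hroots⟩
  · obtain ⟨K, hroots, hK⟩ := ((eventually_countRoots_sub_C hlead hodd).and
      (eventually_gt_atTop (Q.coeff 0))).exists
    exact realizable_iff_exists_realizes.2 ⟨Q - C K,
      hP.append (by simpa using hQ) (by simpa using hK) hroots⟩
end

section
/- Let A(d) denote the number of sequences of admissible pairs for the all-pluses sign pattern of length d+1. Then for every even integer d ≥ 2 one has A(d) ≥ 2·A(d−1), and for every odd integer d ≥ 3 one has 2·A(d) ≥ 3·A(d−1). -/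
open Polynomial

/-- The all-pluses sign pattern. -/
def allPlus : ℕ → ℤ := fun _ => 1

/-- Extend a finite sequence of pairs to `ℕ` (by `(0,0)` beyond `d`). -/
def extendPN (d : ℕ) (pn : Fin d → ℕ × ℕ) : ℕ → ℕ × ℕ :=
  fun k => if hk : k < d then pn ⟨k, hk⟩ else (0, 0)

/-- `A d` is the number of SAPs for the all-pluses sign pattern of length `d+1`. -/
noncomputable def A (d : ℕ) : ℕ :=
  {pn : Fin d → ℕ × ℕ | IsSAP d allPlus (extendPN d pn)}.ncard

/-- `hNum d m` is the number of SAPs for the all-pluses sign pattern of length `d+1`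
whose first pair is `(0, m)`. -/
noncomputable def hNum (d m : ℕ) : ℕ :=
  {pn : Fin d → ℕ × ℕ |
    IsSAP d allPlus (extendPN d pn) ∧ extendPN d pn 0 = (0, m)}.ncard

/-!
For the all-pluses pattern every `pos_k` vanishes, so a SAP is just a sequence of numbers
`neg_k ≤ d - k` of the parity of `d - k` with `neg_k ≤ neg_{k+1} + 1`. Hence a SAP of degree `d - 1`
extends to degree `d` by any new first entry `m` of the right parity that exceeds the old first
entry by at most one. If `d` is even the old first entry is odd, so both `m = 0` and `m = 2` are
always allowed and `A d ≥ 2 A (d-1)`. If `d` is odd then `m = 1` is always allowed, while `m = 3`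
is forbidden only when the old first entry is `0`; that happens for `A (d-2)` of the old SAPs, at
most half of them by the even case.
-/

section AllPlus

variable {d : ℕ}

/-- The set of SAPs for the all-pluses sign pattern of length `d + 1`, so that `A d` is its
cardinality. -/
def allPlusSAPs (d : ℕ) : Set (Fin d → ℕ × ℕ) :=
  {p | IsSAP d allPlus (extendPN d p)}

lemma signChanges_allPlus (n : ℕ) : signChanges allPlus n = 0 := by
  simp [signChanges, allPlus]

lemma signPres_allPlus (n : ℕ) : signPres allPlus n = n := by
  simp [signPres, allPlus]

lemma isSAP_allPlus_iff {f : ℕ → ℕ × ℕ} :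
    IsSAP d allPlus f ↔
      (∀ k < d, (f k).1 = 0 ∧ (f k).2 ≤ d - k ∧ (f k).2 % 2 = (d - k) % 2) ∧
      ∀ k, k + 1 < d → (f k).2 ≤ (f (k + 1)).2 + 1 := by
  simp only [IsSAP, signChanges_allPlus, signPres_allPlus, Int.even_iff]
  constructor
  · rintro ⟨hadm, hstep⟩
    refine ⟨fun k hk => ?_, fun k hk => (hstep k hk).2.1⟩
    obtain ⟨hpos, -, hneg, hparity, -⟩ := hadm k hk
    omega
  · rintro ⟨hadm, hstep⟩
    refine ⟨fun k hk => ?_, fun k hk => ?_⟩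
    · obtain ⟨hpos, hneg, hparity⟩ := hadm k hk
      refine ⟨by omega, by omega, hneg, by omega, by simp [hpos, allPlus]⟩
    · have hk₀ := hadm k (by omega)
      have hk₁ := hadm (k + 1) hk
      have hle := hstep k hk
      omega

lemma extendPN_of_lt (p : Fin d → ℕ × ℕ) {k : ℕ} (hk : k < d) : extendPN d p k = p ⟨k, hk⟩ :=
  dif_pos hk

lemma mem_allPlusSAPs_succ_iff {p : Fin (d + 1) → ℕ × ℕ} :
    p ∈ allPlusSAPs (d + 1) ↔
      (∀ i, (p i).1 = 0 ∧ (p i).2 ≤ d + 1 - i ∧ (p i).2 % 2 = (d + 1 - i) % 2) ∧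
      ∀ i : Fin d, (p i.castSucc).2 ≤ (p i.succ).2 + 1 := by
  simp only [allPlusSAPs, Set.mem_ofPred_eq, isSAP_allPlus_iff, Fin.forall_iff]
  refine and_congr (forall₂_congr fun k hk => by rw [extendPN_of_lt p hk])
    (forall_congr' fun k => ?_)
  rw [Nat.succ_lt_succ_iff]
  refine forall_congr' fun hk => ?_
  rw [extendPN_of_lt p (by omega), extendPN_of_lt p (by omega)]
  rfl

lemma head_parity_of_mem_allPlusSAPs {p : Fin (d + 1) → ℕ × ℕ} (hp : p ∈ allPlusSAPs (d + 1)) :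
    (p 0).2 % 2 = (d + 1) % 2 :=
  ((mem_allPlusSAPs_succ_iff.1 hp).1 0).2.2

lemma cons_mem_allPlusSAPs_iff {x : ℕ × ℕ} {p : Fin (d + 1) → ℕ × ℕ} :
    (Fin.cons x p : Fin (d + 2) → ℕ × ℕ) ∈ allPlusSAPs (d + 2) ↔
      x.1 = 0 ∧ x.2 % 2 = d % 2 ∧ x.2 ≤ (p 0).2 + 1 ∧ p ∈ allPlusSAPs (d + 1) := by
  simp only [mem_allPlusSAPs_succ_iff, Fin.forall_fin_succ, Fin.cons_zero, Fin.cons_succ,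
    Fin.castSucc_zero, Fin.castSucc_succ, Fin.val_zero, Fin.val_succ, Nat.sub_zero,
    Nat.add_sub_add_right]
  rw [show (d + 1 + 1) % 2 = d % 2 from Nat.add_mod_right d 2]
  constructor
  · tauto
  · rintro ⟨hpos, hparity, hstep, ⟨hhead, htail⟩, hsteps⟩
    exact ⟨⟨⟨hpos, by omega, hparity⟩, hhead, htail⟩, hstep, hsteps⟩

lemma allPlusSAPs_finite (d : ℕ) : (allPlusSAPs d).Finite := by
  refine (Set.finite_Icc 0 fun _ => (0, d)).subset fun p hp => ⟨zero_le, fun i => ?_⟩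
  have hi := (isSAP_allPlus_iff.1 hp).1 i i.2
  rw [extendPN_of_lt p i.2] at hi
  exact ⟨hi.1.le, hi.2.1.trans (Nat.sub_le d i)⟩

lemma hNum_add_hNum_le_A {m n : ℕ} (hmn : m ≠ n) : hNum d m + hNum d n ≤ A d := by
  have hdisj : Disjoint {p ∈ allPlusSAPs d | extendPN d p 0 = (0, m)}
      {p ∈ allPlusSAPs d | extendPN d p 0 = (0, n)} :=
    Set.disjoint_left.2 fun p hm hn => hmn (Prod.ext_iff.1 (hm.2.symm.trans hn.2)).2
  have hfin := allPlusSAPs_finite d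
  calc hNum d m + hNum d n
      = ({p ∈ allPlusSAPs d | extendPN d p 0 = (0, m)} ∪
          {p ∈ allPlusSAPs d | extendPN d p 0 = (0, n)}).ncard :=
        (Set.ncard_union_eq hdisj (hfin.sep _) (hfin.sep _)).symm
    _ ≤ A d := Set.ncard_le_ncard (Set.union_subset (Set.sep_subset _ _) (Set.sep_subset _ _)) hfin

lemma hNum_succ (d m : ℕ) :
    hNum (d + 1) m = {p ∈ allPlusSAPs (d + 1) | (p 0).2 = m}.ncard := by
  refine congrArg Set.ncard (Set.ext fun p => and_congr_right fun hp => ?_)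
  have hpos : (p 0).1 = 0 := ((mem_allPlusSAPs_succ_iff.1 hp).1 0).1
  rw [extendPN_of_lt p d.succ_pos, Fin.mk_zero, Prod.ext_iff]
  exact and_iff_right hpos

lemma hNum_add_two {m : ℕ} (hparity : m % 2 = d % 2) :
    hNum (d + 2) m = {p ∈ allPlusSAPs (d + 1) | m ≤ (p 0).2 + 1}.ncard := by
  rw [← Set.ncard_image_of_injective _
    (Fin.cons_right_injective (α := fun _ : Fin (d + 2) => ℕ × ℕ) (0, m))]
  refine congrArg Set.ncard (Set.ext fun q => ?_)
  constructor
  · rintro ⟨hq : q ∈ allPlusSAPs (d + 2), hhead : q 0 = (0, m)⟩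
    rw [← Fin.cons_self_tail q, hhead] at hq ⊢
    obtain ⟨-, -, hstep, htail⟩ := cons_mem_allPlusSAPs_iff.1 hq
    exact ⟨Fin.tail q, ⟨htail, hstep⟩, rfl⟩
  · rintro ⟨p, ⟨hp, hstep⟩, rfl⟩
    exact ⟨cons_mem_allPlusSAPs_iff.2 ⟨rfl, hparity, hstep, hp⟩, rfl⟩

lemma hNum_add_two_eq_A {m : ℕ} (hm : m ≤ 2) (hparity : m % 2 = d % 2) :
    hNum (d + 2) m = A (d + 1) := by
  rw [hNum_add_two hparity]
  refine congrArg Set.ncard (Set.sep_eq_self_iff_mem_true.2 fun p hp => ?_)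
  have hhead := head_parity_of_mem_allPlusSAPs hp
  omega

lemma hNum_three_add_hNum_zero (hd : Odd d) : hNum (d + 2) 3 + hNum (d + 1) 0 = A (d + 1) := by
  rw [Nat.odd_iff] at hd
  have hcompl : {p ∈ allPlusSAPs (d + 1) | (p 0).2 = 0} =
      allPlusSAPs (d + 1) \ {p ∈ allPlusSAPs (d + 1) | 3 ≤ (p 0).2 + 1} := by
    ext p
    simp only [Set.mem_ofPred_eq, Set.mem_sdiff, not_and]
    refine and_congr_right fun hp => ?_
    have hhead := head_parity_of_mem_allPlusSAPs hp
    simp only [hp, true_imp_iff]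
    omega
  rw [hNum_add_two hd.symm, hNum_succ, hcompl, add_comm]
  exact Set.ncard_sdiff_add_ncard_of_subset (Set.sep_subset _ _) (allPlusSAPs_finite _)

lemma two_mul_A_le_A_of_even (hd : Even d) : 2 * A (d + 1) ≤ A (d + 2) := by
  rw [Nat.even_iff] at hd
  calc 2 * A (d + 1) = hNum (d + 2) 0 + hNum (d + 2) 2 := by
        rw [hNum_add_two_eq_A (by omega) (by omega), hNum_add_two_eq_A le_rfl (by omega), two_mul]
    _ ≤ A (d + 2) := hNum_add_hNum_le_A (by decide)

lemma three_mul_A_le_two_mul_A_of_even (hd : Even d) : 3 * A (d + 2) ≤ 2 * A (d + 3) := by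
  have hodd : Odd (d + 1) := hd.add_one
  have hone : hNum (d + 3) 1 = A (d + 2) :=
    hNum_add_two_eq_A one_le_two (Nat.odd_iff.1 hodd).symm
  have hthree : hNum (d + 3) 3 + hNum (d + 2) 0 = A (d + 2) := hNum_three_add_hNum_zero hodd
  have hzero : hNum (d + 2) 0 = A (d + 1) :=
    hNum_add_two_eq_A zero_le_two (Nat.even_iff.1 hd).symm
  have hsum : hNum (d + 3) 1 + hNum (d + 3) 3 ≤ A (d + 3) := hNum_add_hNum_le_A (by decide)
  have hdouble : 2 * A (d + 1) ≤ A (d + 2) := two_mul_A_le_A_of_even hd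
  omega

end AllPlus

/-- For even `d ≥ 2` one has `A d ≥ 2 A (d-1)`; for odd `d ≥ 3`, `2 A d ≥ 3 A (d-1)`. -/
theorem stmt9 :
    (∀ d : ℕ, 2 ≤ d → Even d → 2 * A (d - 1) ≤ A d) ∧
    (∀ d : ℕ, 3 ≤ d → Odd d → 3 * A (d - 1) ≤ 2 * A d) := by
  refine ⟨fun d hd heven => ?_, fun d hd hodd => ?_⟩
  · obtain ⟨e, rfl⟩ := Nat.exists_eq_add_of_le' hd
    exact two_mul_A_le_A_of_even (by simpa [Nat.even_add] using heven)
  · obtain ⟨e, rfl⟩ := Nat.exists_eq_add_of_le' hd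
    exact three_mul_A_le_two_mul_A_of_even (by grind)
end

section
/- For a real number a > 0, let S(x) := (x+1)^3 (x−a)^2, a monic real polynomial of degree 5. The coefficient of x^4 in S is positive if and only if a < 3/2. Moreover, the sequence of signs of the coefficients of S (from the leading coefficient down to the constant term) equals: (+,+,+,+,−,+) for a ∈ (0, (3−√6)/3); (+,+,+,−,−,+) for a ∈ ((3−√6)/3, 3−√6); (+,+,−,−,−,+) for a ∈ (3−√6, 2/3); and (+,+,−,−,+,+) for a ∈ (2/3, 3/2). -/
open Polynomial

/-!
All thresholds come from one quadratic. The coefficients of `X` and `X ^ 4` are `a (3 a - 2)` and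
`3 - 2 a`, the coefficient of `X ^ 3` is `q(a)` and that of `X ^ 2` is `q(3 a) / 3`, where
`q(t) = t ^ 2 - 6 t + 3 = (t - 3) ^ 2 - 6`. Both `a` and `3 a` stay below the larger root `3 + √6`
of `q` when `a < 3 / 2`, so only the smaller root `3 - √6` separates signs.
-/

section CoeffMul

variable {R : Type*} [Ring R] (p : R[X]) (a : R)

theorem coeff_zero_mul_X_sub_C_sq : (p * (X - C a) ^ 2).coeff 0 = p.coeff 0 * a ^ 2 := by
  simp [mul_coeff_zero, sq]

theorem coeff_one_mul_X_sub_C_sq :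
    (p * (X - C a) ^ 2).coeff 1 = p.coeff 1 * a ^ 2 - 2 * p.coeff 0 * a := by
  rw [sq, ← mul_assoc, coeff_mul_X_sub_C, coeff_mul_X_sub_C, mul_coeff_zero]
  simp only [coeff_sub, coeff_X_zero, coeff_C_zero]
  noncomm_ring

theorem coeff_add_two_mul_X_sub_C_sq (n : ℕ) :
    (p * (X - C a) ^ 2).coeff (n + 2) =
      p.coeff (n + 2) * a ^ 2 - 2 * p.coeff (n + 1) * a + p.coeff n := by
  rw [sq, ← mul_assoc, coeff_mul_X_sub_C, coeff_mul_X_sub_C, coeff_mul_X_sub_C]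
  noncomm_ring

end CoeffMul

section SmallerRoot

variable {R : Type*} [CommRing R] [LinearOrder R] [IsStrictOrderedRing R] {s t c : R}

theorem sq_lt_sub_sq_iff_of_lt_add (h : t < c + s) : s ^ 2 < (t - c) ^ 2 ↔ t < c - s := by
  have factor : (t - c) ^ 2 - s ^ 2 = (c - s - t) * (c + s - t) := by ring
  rw [← sub_pos, factor, mul_pos_iff_of_pos_right (sub_pos.2 h), sub_pos]

theorem sub_sq_lt_sq_iff_of_lt_add (h : t < c + s) : (t - c) ^ 2 < s ^ 2 ↔ c - s < t := by
  have factor : s ^ 2 - (t - c) ^ 2 = (t - (c - s)) * (c + s - t) := by ring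
  rw [← sub_pos, factor, mul_pos_iff_of_pos_right (sub_pos.2 h), sub_pos]

end SmallerRoot

/-- The quintic `S = (X + 1) ^ 3 * (X - a) ^ 2` with triple root `-1` and double root `a`. The
parameter `a` is explicit so that coefficients at different parameters can be compared. -/
noncomputable def tripleDoubleQuintic {R : Type*} [Ring R] (a : R) : R[X] :=
  (X + 1) ^ 3 * (X - C a) ^ 2

namespace tripleDoubleQuintic

section Coeff

variable {R : Type*} [CommRing R] (a : R)

theorem coeff_zero : (tripleDoubleQuintic a).coeff 0 = a ^ 2 := by
  rw [tripleDoubleQuintic, coeff_zero_mul_X_sub_C_sq]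
  simp [coeff_X_add_one_pow]

theorem coeff_one : (tripleDoubleQuintic a).coeff 1 = a * (3 * a - 2) := by
  rw [tripleDoubleQuintic, coeff_one_mul_X_sub_C_sq]
  simp only [coeff_X_add_one_pow, Nat.choose]
  push_cast
  ring

theorem coeff_two : (tripleDoubleQuintic a).coeff 2 = 3 * a ^ 2 - 6 * a + 1 := by
  rw [tripleDoubleQuintic, coeff_add_two_mul_X_sub_C_sq]
  simp only [coeff_X_add_one_pow, Nat.choose]
  push_cast
  ring

theorem coeff_three : (tripleDoubleQuintic a).coeff 3 = a ^ 2 - 6 * a + 3 := by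
  rw [tripleDoubleQuintic, coeff_add_two_mul_X_sub_C_sq]
  simp only [coeff_X_add_one_pow, Nat.choose]
  push_cast
  ring

theorem coeff_four : (tripleDoubleQuintic a).coeff 4 = 3 - 2 * a := by
  rw [tripleDoubleQuintic, coeff_add_two_mul_X_sub_C_sq]
  simp only [coeff_X_add_one_pow, Nat.choose]
  push_cast
  ring

theorem coeff_five : (tripleDoubleQuintic a).coeff 5 = 1 := by
  rw [tripleDoubleQuintic, coeff_add_two_mul_X_sub_C_sq]
  simp only [coeff_X_add_one_pow, Nat.choose]
  push_cast
  ring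

theorem three_mul_coeff_two :
    3 * (tripleDoubleQuintic a).coeff 2 = (tripleDoubleQuintic (3 * a)).coeff 3 := by
  rw [coeff_two, coeff_three]
  ring

end Coeff

section OrderedRing

variable {R : Type*} [CommRing R] [LinearOrder R] [IsStrictOrderedRing R] {a : R}

theorem coeff_zero_pos (ha : a ≠ 0) : 0 < (tripleDoubleQuintic a).coeff 0 := by
  rw [coeff_zero]
  positivity

theorem coeff_five_pos : 0 < (tripleDoubleQuintic a).coeff 5 :=
  (coeff_five a).symm ▸ one_pos

end OrderedRing

section OrderedField

variable {K : Type*} [Field K] [LinearOrder K] [IsStrictOrderedRing K] {a : K}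

theorem coeff_one_pos_iff (ha : 0 < a) : 0 < (tripleDoubleQuintic a).coeff 1 ↔ 2 / 3 < a := by
  rw [coeff_one, mul_pos_iff_of_pos_left ha, sub_pos, div_lt_iff₀' three_pos]

theorem coeff_one_neg_iff (ha : 0 < a) : (tripleDoubleQuintic a).coeff 1 < 0 ↔ a < 2 / 3 := by
  rw [coeff_one, ← smul_eq_mul, smul_neg_iff_of_pos_left ha, sub_neg, lt_div_iff₀' three_pos]

theorem coeff_four_pos_iff : 0 < (tripleDoubleQuintic a).coeff 4 ↔ a < 3 / 2 := by
  rw [coeff_four, sub_pos, lt_div_iff₀' two_pos]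

end OrderedField

section Real

variable {a : ℝ}

theorem coeff_three_eq_sub_sq_sub_sqrt_sq :
    (tripleDoubleQuintic a).coeff 3 = (a - 3) ^ 2 - √6 ^ 2 := by
  rw [coeff_three, Real.sq_sqrt (by norm_num)]
  ring

theorem coeff_three_pos_iff (ha : a < 3 + √6) :
    0 < (tripleDoubleQuintic a).coeff 3 ↔ a < 3 - √6 := by
  rw [coeff_three_eq_sub_sq_sub_sqrt_sq, sub_pos, sq_lt_sub_sq_iff_of_lt_add ha]

theorem coeff_three_neg_iff (ha : a < 3 + √6) :
    (tripleDoubleQuintic a).coeff 3 < 0 ↔ 3 - √6 < a := by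
  rw [coeff_three_eq_sub_sq_sub_sqrt_sq, sub_neg, sub_sq_lt_sq_iff_of_lt_add ha]

theorem coeff_two_pos_iff (ha : 3 * a < 3 + √6) :
    0 < (tripleDoubleQuintic a).coeff 2 ↔ a < (3 - √6) / 3 := by
  rw [← mul_pos_iff_of_pos_left three_pos, three_mul_coeff_two, coeff_three_pos_iff ha,
    lt_div_iff₀' three_pos]

theorem coeff_two_neg_iff (ha : 3 * a < 3 + √6) :
    (tripleDoubleQuintic a).coeff 2 < 0 ↔ (3 - √6) / 3 < a := by
  rw [← smul_neg_iff_of_pos_left (three_pos : (0 : ℝ) < 3), smul_eq_mul, three_mul_coeff_two,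
    coeff_three_neg_iff ha, div_lt_iff₀' three_pos]

end Real

end tripleDoubleQuintic

theorem sqrt_six_lt_three : √6 < 3 := by
  rw [Real.sqrt_lt' three_pos]
  norm_num

theorem three_sub_sqrt_six_lt_two_thirds : 3 - √6 < 2 / 3 := by
  have seven_thirds_lt : 7 / 3 < √6 := Real.lt_sqrt_of_sq_lt (by norm_num)
  linarith

open tripleDoubleQuintic

/-- Signs of the coefficients of `S = (x+1)^3 (x-a)^2`, `a > 0`. -/
theorem stmt10 (a : ℝ) (ha : 0 < a)
    (S : Polynomial ℝ)
    (hS : S = (Polynomial.X + 1) ^ 3 * (Polynomial.X - Polynomial.C a) ^ 2) :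
    (0 < S.coeff 4 ↔ a < 3 / 2) ∧
    (a < (3 - Real.sqrt 6) / 3 →
      0 < S.coeff 5 ∧ 0 < S.coeff 4 ∧ 0 < S.coeff 3 ∧ 0 < S.coeff 2 ∧
        S.coeff 1 < 0 ∧ 0 < S.coeff 0) ∧
    ((3 - Real.sqrt 6) / 3 < a → a < 3 - Real.sqrt 6 →
      0 < S.coeff 5 ∧ 0 < S.coeff 4 ∧ 0 < S.coeff 3 ∧ S.coeff 2 < 0 ∧
        S.coeff 1 < 0 ∧ 0 < S.coeff 0) ∧
    (3 - Real.sqrt 6 < a → a < 2 / 3 →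
      0 < S.coeff 5 ∧ 0 < S.coeff 4 ∧ S.coeff 3 < 0 ∧ S.coeff 2 < 0 ∧
        S.coeff 1 < 0 ∧ 0 < S.coeff 0) ∧
    (2 / 3 < a → a < 3 / 2 →
      0 < S.coeff 5 ∧ 0 < S.coeff 4 ∧ S.coeff 3 < 0 ∧ S.coeff 2 < 0 ∧
        0 < S.coeff 1 ∧ 0 < S.coeff 0) := by
  obtain rfl : S = tripleDoubleQuintic a := hS
  have h_lt_three := sqrt_six_lt_three
  have h_lt_two_thirds := three_sub_sqrt_six_lt_two_thirds
  refine ⟨coeff_four_pos_iff, fun h => ?_, fun h h' => ?_, fun h h' => ?_, fun h h' => ?_⟩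
  · exact ⟨coeff_five_pos, coeff_four_pos_iff.2 (by linarith),
      (coeff_three_pos_iff (by linarith)).2 (by linarith), (coeff_two_pos_iff (by linarith)).2 h,
      (coeff_one_neg_iff ha).2 (by linarith), coeff_zero_pos ha.ne'⟩
  · exact ⟨coeff_five_pos, coeff_four_pos_iff.2 (by linarith),
      (coeff_three_pos_iff (by linarith)).2 h', (coeff_two_neg_iff (by linarith)).2 h,
      (coeff_one_neg_iff ha).2 (by linarith), coeff_zero_pos ha.ne'⟩
  · exact ⟨coeff_five_pos, coeff_four_pos_iff.2 (by linarith),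
      (coeff_three_neg_iff (by linarith)).2 h, (coeff_two_neg_iff (by linarith)).2 (by linarith),
      (coeff_one_neg_iff ha).2 h', coeff_zero_pos ha.ne'⟩
  · exact ⟨coeff_five_pos, coeff_four_pos_iff.2 h',
      (coeff_three_neg_iff (by linarith)).2 (by linarith),
      (coeff_two_neg_iff (by linarith)).2 (by linarith),
      (coeff_one_pos_iff ha).2 h, coeff_zero_pos ha.ne'⟩
end

section
/- For a real number a > 0, let T(x) := (x+a)^2 (x−1)^3, a monic real polynomial of degree 5. The coefficient of x^4 in T is positive if and only if a > 3/2. Moreover, the sequence of signs of the coefficients of T (from the leading coefficient down to the constant term) equals: (+,+,−,+,+,−) for a ∈ (3/2, (3+√6)/3); (+,+,−,−,+,−) for a ∈ ((3+√6)/3, 3+√6); and (+,+,+,−,+,−) for a > 3+√6. -/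
open Polynomial

/-!
The coefficients of `T` are explicit polynomials in `a` of degree at most two, so each sign is
decided by the real roots of one of them. The only irrational roots come from the coefficients
`(a - 3) ^ 2 - 6` of `x ^ 3` and `(6 - (3 * a - 3) ^ 2) / 3` of `x ^ 2`. Up to a negative factor,
the second is the first evaluated at `3 * a`, so the thresholds `3 + √6` and `(3 + √6) / 3` differ
by a factor `3`.
-/

section Quadratic

variable {x b c : ℝ}

lemma sub_sq_lt_iff : (x - b) ^ 2 < c ↔ b - √c < x ∧ x < b + √c := by
  rw [Real.sq_lt, neg_lt_sub_iff_lt_add', sub_lt_iff_lt_add', sub_lt_iff_lt_add]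

lemma lt_sub_sq_iff (hc : 0 ≤ c) : c < (x - b) ^ 2 ↔ x < b - √c ∨ b + √c < x := by
  rw [← Real.sqrt_lt_sqrt_iff hc, Real.sqrt_sq_eq_abs, lt_abs, neg_sub, lt_sub_iff_add_lt',
    lt_sub_comm, or_comm]

end Quadratic

/-- The monic quintic `T` with a double root at `-a` and a triple root at `1`, whose coefficient
signs are studied as `a` varies. -/
noncomputable def quinticT {R : Type*} [CommRing R] (a : R) : R[X] :=
  (X + C a) ^ 2 * (X - 1) ^ 3

namespace quinticT

section CommRing

variable {R : Type*} [CommRing R] (a : R)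

lemma eq_expansion :
    quinticT a = X ^ 5 + C (2 * a - 3) * X ^ 4 + C (a ^ 2 - 6 * a + 3) * X ^ 3
      + C (-3 * a ^ 2 + 6 * a - 1) * X ^ 2 + C (3 * a ^ 2 - 2 * a) * X + C (-a ^ 2) := by
  simp only [quinticT, map_add, map_sub, map_mul, map_pow, map_neg, map_one, map_ofNat]
  ring

lemma coeff_five : (quinticT a).coeff 5 = 1 := by
  -- `C` must not be distributed over sums, so that `coeff_C_mul` applies to each whole term.
  simp [eq_expansion, -map_add, -map_sub, -map_neg]

lemma coeff_four : (quinticT a).coeff 4 = 2 * a - 3 := by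
  simp [eq_expansion, -map_add, -map_sub, -map_neg]

lemma coeff_three : (quinticT a).coeff 3 = a ^ 2 - 6 * a + 3 := by
  simp [eq_expansion, -map_add, -map_sub, -map_neg]

lemma coeff_two : (quinticT a).coeff 2 = -3 * a ^ 2 + 6 * a - 1 := by
  simp [eq_expansion, -map_add, -map_sub, -map_neg]

lemma coeff_one : (quinticT a).coeff 1 = 3 * a ^ 2 - 2 * a := by
  simp [eq_expansion, coeff_C, -map_add, -map_sub, -map_neg]

lemma coeff_zero : (quinticT a).coeff 0 = -a ^ 2 := by
  simp [eq_expansion, -map_add, -map_sub, -map_neg]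

lemma coeff_three_eq_sub_sq_sub : (quinticT a).coeff 3 = (a - 3) ^ 2 - 6 := by
  rw [coeff_three]
  ring

lemma three_mul_coeff_two : 3 * (quinticT a).coeff 2 = 6 - (3 * a - 3) ^ 2 := by
  rw [coeff_two]
  ring

end CommRing

section OrderedField

variable {K : Type*} [Field K] [LinearOrder K] [IsStrictOrderedRing K] {a : K}

lemma coeff_four_pos_iff : 0 < (quinticT a).coeff 4 ↔ 3 / 2 < a := by
  rw [coeff_four, sub_pos, div_lt_iff₀' two_pos]

lemma coeff_one_pos_iff : 0 < (quinticT a).coeff 1 ↔ a < 0 ∨ 2 / 3 < a := by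
  have factored : 3 * a ^ 2 - 2 * a = a * (3 * a - 2) := by ring
  rw [coeff_one, factored, mul_pos_iff, sub_pos, sub_neg, div_lt_iff₀' three_pos]
  constructor
  · rintro (⟨-, h⟩ | ⟨h, -⟩)
    exacts [.inr h, .inl h]
  · rintro (h | h)
    exacts [.inr ⟨h, by linarith⟩, .inl ⟨by linarith, h⟩]

end OrderedField

lemma coeff_zero_neg_iff {R : Type*} [CommRing R] [LinearOrder R] [IsStrictOrderedRing R] {a : R} :
    (quinticT a).coeff 0 < 0 ↔ a ≠ 0 := by
  rw [coeff_zero, neg_lt_zero, sq_pos_iff]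

section Real

variable {a : ℝ}

lemma coeff_three_neg_iff : (quinticT a).coeff 3 < 0 ↔ 3 - √6 < a ∧ a < 3 + √6 := by
  rw [coeff_three_eq_sub_sq_sub, sub_neg, sub_sq_lt_iff]

lemma coeff_three_pos_iff : 0 < (quinticT a).coeff 3 ↔ a < 3 - √6 ∨ 3 + √6 < a := by
  rw [coeff_three_eq_sub_sq_sub, sub_pos, lt_sub_sq_iff (by norm_num)]

lemma coeff_two_pos_iff :
    0 < (quinticT a).coeff 2 ↔ (3 - √6) / 3 < a ∧ a < (3 + √6) / 3 := by
  rw [← mul_pos_iff_of_pos_left three_pos, three_mul_coeff_two, sub_pos, sub_sq_lt_iff,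
    div_lt_iff₀' three_pos, lt_div_iff₀' three_pos]

lemma coeff_two_neg_iff :
    (quinticT a).coeff 2 < 0 ↔ a < (3 - √6) / 3 ∨ (3 + √6) / 3 < a := by
  rw [← smul_neg_iff_of_pos_left (three_pos (α := ℝ)), smul_eq_mul, three_mul_coeff_two, sub_neg,
    lt_sub_sq_iff (by norm_num), div_lt_iff₀' three_pos, lt_div_iff₀' three_pos]

end Real

end quinticT

/-- Signs of the coefficients of `T = (x+a)^2 (x-1)^3`, `a > 0`. -/
theorem stmt11 (a : ℝ) (ha : 0 < a)
    (T : Polynomial ℝ)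
    (hT : T = (Polynomial.X + Polynomial.C a) ^ 2 * (Polynomial.X - 1) ^ 3) :
    (0 < T.coeff 4 ↔ 3 / 2 < a) ∧
    (3 / 2 < a → a < (3 + Real.sqrt 6) / 3 →
      0 < T.coeff 5 ∧ 0 < T.coeff 4 ∧ T.coeff 3 < 0 ∧ 0 < T.coeff 2 ∧
        0 < T.coeff 1 ∧ T.coeff 0 < 0) ∧
    ((3 + Real.sqrt 6) / 3 < a → a < 3 + Real.sqrt 6 →
      0 < T.coeff 5 ∧ 0 < T.coeff 4 ∧ T.coeff 3 < 0 ∧ T.coeff 2 < 0 ∧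
        0 < T.coeff 1 ∧ T.coeff 0 < 0) ∧
    (3 + Real.sqrt 6 < a →
      0 < T.coeff 5 ∧ 0 < T.coeff 4 ∧ 0 < T.coeff 3 ∧ T.coeff 2 < 0 ∧
        0 < T.coeff 1 ∧ T.coeff 0 < 0) := by
  obtain rfl : T = quinticT a := hT
  have sqrt_six_gt : 3 / 2 < √6 := Real.lt_sqrt_of_sq_lt (by norm_num)
  have coeff_five_pos : 0 < (quinticT a).coeff 5 := quinticT.coeff_five a ▸ one_pos
  have coeff_zero_neg := quinticT.coeff_zero_neg_iff.mpr ha.ne'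
  have coeff_one_pos (h : 3 / 2 < a) : 0 < (quinticT a).coeff 1 :=
    quinticT.coeff_one_pos_iff.mpr (.inr (by linarith))
  refine ⟨quinticT.coeff_four_pos_iff, fun hlo hhi ↦ ?_, fun hlo hhi ↦ ?_, fun hlo ↦ ?_⟩
  · exact ⟨coeff_five_pos, quinticT.coeff_four_pos_iff.mpr hlo,
      quinticT.coeff_three_neg_iff.mpr ⟨by linarith, by linarith⟩,
      quinticT.coeff_two_pos_iff.mpr ⟨by linarith, hhi⟩, coeff_one_pos hlo, coeff_zero_neg⟩
  · have h : 3 / 2 < a := by linarith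
    exact ⟨coeff_five_pos, quinticT.coeff_four_pos_iff.mpr h,
      quinticT.coeff_three_neg_iff.mpr ⟨by linarith, hhi⟩,
      quinticT.coeff_two_neg_iff.mpr (.inr hlo), coeff_one_pos h, coeff_zero_neg⟩
  · have h : 3 / 2 < a := by linarith
    exact ⟨coeff_five_pos, quinticT.coeff_four_pos_iff.mpr h,
      quinticT.coeff_three_pos_iff.mpr (.inr hlo),
      quinticT.coeff_two_neg_iff.mpr (.inr (by linarith)), coeff_one_pos h, coeff_zero_neg⟩
end
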